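/- arXiv:1010.2565 — 2 statements merged into one kernel-verified Lean document; each statement's English description precedes it below -/
import Mathlib

section
/- Let A be an n-by-n monotone column matrix. For S ⊆ {1,…,n}, let A_S denote the matrix obtained from A by replacing each column indexed by S with a column of all ones. Then for any S ⊆ {1,…,n} and distinct i, j ∈ {1,…,n} \ S: per(A_{S∪{i}})·per(A_{S∪{j}}) ≥ per(A_{S∪{i,j}})·per(A_S). -/
/-!
The inequality is the Rayleigh inequality for the multiaffine real polynomial
`f(z) = per (z j + A i j)`, whose coefficients are the permanents `per A_S`. It follows from
stability: `f(z) ≠ 0` whenever all `z j` lie in the open upper half-plane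
(`perm_antitone_ne_zero`, `mul_le_mul_of_stable`). Since `A_S` again has monotone columns, only the
columns `i`, `j` need free variables; the other `z k` are sent to `0` along `ε * I`.

Since `f` is linear in each column and decreasing vectors are, up to constants, nonnegative
combinations of threshold vectors `1_{i < p}`, stability reduces to threshold columns
(`linearMap_antitone_ne_zero`). After dividing column `j` by `z j` and rotating, the matrix has
entries `y j` in the first `p j` rows and `x` below, with `x` and all `y j` in the upper half-plane.

Such a Ferrers board can be built from the empty one by adding rows and columns that are constant
when added (`Board`). Let `M k` be the weighted count of `k`-matchings of a board with `a` rows and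
`b` columns (`matchSum`), with every weight shifted by an indeterminate `X`. Adding a row of weight
`x` turns `M (k + 1)` into `M (k + 1) + (b - k) * x * M k`, while
`(M (k + 1))' = (a - k) * (b - k) * M k`. The polynomial `M (k + 1)` has its roots in the lower
half-plane by induction, so its logarithmic derivative has nonpositive imaginary part on the upper
one, and the new polynomial cannot vanish there (`StableSeq.succ`). For the full board, `M n` is the
permanent.
-/

/-- The permanent of a square matrix over a commutative ring. -/
noncomputable def perm {n : ℕ} {R : Type*} [CommRing R]
    (H : Matrix (Fin n) (Fin n) R) : R :=
  ∑ σ : Equiv.Perm (Fin n), ∏ i : Fin n, H i (σ i)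

/-- A monotone column matrix: entries weakly decrease down each column. -/
def MonotoneColumn {m n : ℕ} (A : Matrix (Fin m) (Fin n) ℝ) : Prop :=
  ∀ i i' : Fin m, ∀ j : Fin n, i ≤ i' → A i' j ≤ A i j

/-- `A_S`: replace each column of `A` indexed by `S` with a column of ones. -/
def colOnes {n : ℕ} (A : Matrix (Fin n) (Fin n) ℝ) (S : Finset (Fin n)) :
    Matrix (Fin n) (Fin n) ℝ :=
  fun i j => if j ∈ S then 1 else A i j

open Finset Polynomial

/-! ### Weighted matchings of a complete bipartite graph -/

section Matchings
variable {ι κ R : Type*} [DecidableEq ι] [DecidableEq κ] [CommRing R]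

open Classical in
/-- The `k`-element matchings between `A` and `B`: sets of `k` pairs in `A ×ˢ B`, no two of which
share a first or a second coordinate. -/
noncomputable def matchings (A : Finset ι) (B : Finset κ) (k : ℕ) : Finset (Finset (ι × κ)) :=
  {E ∈ (A ×ˢ B).powersetCard k |
    Set.InjOn Prod.fst (E : Set (ι × κ)) ∧ Set.InjOn Prod.snd (E : Set (ι × κ))}

/-- The weighted count of `k`-element matchings between `A` and `B`, a matching having weight the
product of `w` over its pairs. -/
noncomputable def matchSum (w : ι → κ → R) (A : Finset ι) (B : Finset κ) (k : ℕ) : R :=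
  ∑ E ∈ matchings A B k, ∏ e ∈ E, w e.1 e.2

theorem mem_matchings {A : Finset ι} {B : Finset κ} {k : ℕ} {E : Finset (ι × κ)} :
    E ∈ matchings A B k ↔ (∀ a b, (a, b) ∈ E → a ∈ A ∧ b ∈ B) ∧ E.card = k ∧
      (∀ a b b', (a, b) ∈ E → (a, b') ∈ E → b = b') ∧
      (∀ a a' b, (a, b) ∈ E → (a', b) ∈ E → a = a') := by
  rw [matchings, mem_filter, mem_powersetCard]
  simp only [Finset.subset_iff, Prod.forall, mem_product, Set.InjOn, mem_coe, Prod.mk.injEq]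
  grind

theorem matchSum_zero (w : ι → κ → R) (A : Finset ι) (B : Finset κ) :
    matchSum w A B 0 = 1 := by
  have : matchings A B 0 = {∅} := by
    ext E
    simp only [mem_matchings, card_eq_zero, mem_singleton]
    constructor
    · tauto
    · rintro rfl; simp
  simp [matchSum, this]

theorem card_image_snd_of_mem_matchings {A : Finset ι} {B : Finset κ} {k : ℕ}
    {E : Finset (ι × κ)} (hE : E ∈ matchings A B k) :
    E.image Prod.snd ⊆ B ∧ (E.image Prod.snd).card = k := by
  classical
  simp only [matchings, mem_filter, mem_powersetCard] at hE
  refine ⟨fun b hb => ?_, ?_⟩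
  · obtain ⟨e, he, rfl⟩ := mem_image.1 hb
    exact (mem_product.1 (hE.1.1 he)).2
  · rw [card_image_of_injOn hE.2.2, hE.1.2]

theorem matchSum_swap (w : ι → κ → R) (A : Finset ι) (B : Finset κ) (k : ℕ) :
    matchSum (fun b a => w a b) B A k = matchSum w A B k := by
  refine sum_bij' (fun E _ => E.map (Equiv.prodComm κ ι).toEmbedding)
    (fun E _ => E.map (Equiv.prodComm ι κ).toEmbedding) ?_ ?_ ?_ ?_ ?_
  · intro E hE
    simp only [mem_matchings, card_map, mem_map_equiv, Equiv.prodComm_symm, Equiv.prodComm_apply,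
      Prod.swap_prod_mk] at hE ⊢
    grind
  · intro E hE
    simp only [mem_matchings, card_map, mem_map_equiv, Equiv.prodComm_symm, Equiv.prodComm_apply,
      Prod.swap_prod_mk] at hE ⊢
    grind
  · intro E hE; ext ⟨a, b⟩; simp [mem_map_equiv]
  · intro E hE; ext ⟨a, b⟩; simp [mem_map_equiv]
  · intro E hE; simp

/-- Adding a vertex `i` all of whose edges have the same weight `x`: a new matching using `i` is an
old `k`-matching together with one of the `B.card - k` unmatched vertices of `B`. For `k > B.card`
the factor is negative, but there `matchSum w A B k = 0`. -/
theorem matchSum_insert_left (w : ι → κ → R) {A : Finset ι} {B : Finset κ} {i : ι} {x : R}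
    (hi : i ∉ A) (hx : ∀ j ∈ B, w i j = x) (k : ℕ) :
    matchSum w (insert i A) B (k + 1) =
      matchSum w A B (k + 1) + ((B.card : R) - k) * x * matchSum w A B k := by
  classical
  -- Split the matchings according to whether they use `i`.
  have h1 : {E ∈ matchings (insert i A) B (k + 1) | ¬ ∃ j, (i, j) ∈ E} = matchings A B (k + 1) := by
    ext E
    simp only [mem_filter, mem_matchings]
    grind
  have h2 : ∑ E ∈ matchings (insert i A) B (k + 1) with ∃ j, (i, j) ∈ E, ∏ e ∈ E, w e.1 e.2 =
      ∑ E ∈ matchings A B k, ∑ _j ∈ B \ E.image Prod.snd, x * ∏ e ∈ E, w e.1 e.2 := by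
    rw [sum_sigma']
    symm
    refine sum_bij (fun p _ => insert (i, p.2) p.1) ?_ ?_ ?_ ?_
    · rintro ⟨E, j⟩ h
      simp only [mem_sigma, mem_matchings, mem_sdiff, mem_image, Prod.exists, exists_eq_right,
        not_exists, mem_filter] at h ⊢
      have : (i, j) ∉ E := by grind
      rw [card_insert_of_notMem this]
      simp only [mem_insert, Prod.mk.injEq]
      grind
    · rintro ⟨E, j⟩ h ⟨E', j'⟩ h' heq
      simp only [mem_sigma, mem_matchings, mem_sdiff, mem_image, Prod.exists, exists_eq_right,
        not_exists] at h h' heq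
      have hE : ∀ b, (i, b) ∉ E := by grind
      have hE' : ∀ b, (i, b) ∉ E' := by grind
      have hj : j = j' := by
        have : (i, j) ∈ insert (i, j') E' := heq ▸ mem_insert_self _ _
        grind
      subst hj
      have : E = E' := by
        rw [← erase_insert (hE j), heq, erase_insert (hE' j)]
      rw [this]
    · intro E hE
      simp only [mem_filter, mem_matchings] at hE
      obtain ⟨⟨hE1, hE2, hE3, hE4⟩, j, hj⟩ := hE
      refine ⟨⟨E.erase (i, j), j⟩, ?_, insert_erase hj⟩
      simp only [mem_sigma, mem_matchings, mem_sdiff, mem_image, Prod.exists, exists_eq_right,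
        not_exists, card_erase_of_mem hj, mem_erase]
      grind
    · rintro ⟨E, j⟩ h
      simp only [mem_sigma, mem_matchings, mem_sdiff, mem_image, Prod.exists, exists_eq_right,
        not_exists] at h ⊢
      rw [prod_insert (by grind), hx j h.2.1]
  rw [matchSum, ← sum_filter_add_sum_filter_not _ (fun E => ∃ j, (i, j) ∈ E), h1, h2, add_comm,
    matchSum, matchSum, mul_sum]
  congr 1
  refine sum_congr rfl fun E hE => ?_
  obtain ⟨hs, hc⟩ := card_image_snd_of_mem_matchings hE
  rw [sum_const, card_sdiff_of_subset hs, hc, nsmul_eq_mul, Nat.cast_sub (hc ▸ card_le_card hs)]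
  ring

theorem matchSum_insert_right (w : ι → κ → R) {A : Finset ι} {B : Finset κ} {j : κ} {y : R}
    (hj : j ∉ B) (hy : ∀ i ∈ A, w i j = y) (k : ℕ) :
    matchSum w A (insert j B) (k + 1) =
      matchSum w A B (k + 1) + ((A.card : R) - k) * y * matchSum w A B k := by
  simpa only [matchSum_swap] using matchSum_insert_left (fun b a => w a b) hj hy k

theorem matchSum_eq_zero (w : ι → κ → R) {A : Finset ι} {B : Finset κ} {k : ℕ}
    (h : B.card < k) : matchSum w A B k = 0 := by
  refine sum_eq_zero fun E hE => ?_
  obtain ⟨hs, hc⟩ := card_image_snd_of_mem_matchings hE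
  have := card_le_card hs
  omega

end Matchings

/-- Perfect matchings are permutations. -/
theorem matchSum_univ {n : ℕ} {R : Type*} [CommRing R] (w : Matrix (Fin n) (Fin n) R) :
    matchSum w univ univ n = perm w := by
  classical
  symm
  refine sum_bij (fun σ _ => univ.image fun i => (i, σ i)) ?_ ?_ ?_ ?_
  · intro σ _
    rw [mem_matchings, card_image_of_injective _ (fun a b h => by simpa using congrArg Prod.fst h)]
    simp only [mem_image, mem_univ, true_and, Prod.mk.injEq, card_univ, Fintype.card_fin]
    refine ⟨by simp, ?_, ?_⟩
    · grind
    · rintro a a' b ⟨_, rfl, rfl⟩ ⟨_, rfl, h⟩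
      exact (σ.injective h).symm
  · intro σ _ τ _ h
    ext1 i
    have : (i, σ i) ∈ univ.image fun i => (i, τ i) := by
      rw [← h]; exact mem_image_of_mem _ (mem_univ i)
    have h' : τ i = σ i := by simpa using this
    exact h'.symm
  · intro E hE
    rw [mem_matchings] at hE
    obtain ⟨-, hc, h1, h2⟩ := hE
    have himg : E.image Prod.fst = univ := by
      rw [← card_eq_iff_eq_univ, card_image_of_injOn, hc, Fintype.card_fin]
      rintro ⟨a, b⟩ h ⟨a', b'⟩ h' (rfl : a = a')
      rw [h1 a b b' h h']
    have hex : ∀ i, ∃ j, (i, j) ∈ E := by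
      intro i
      have : i ∈ E.image Prod.fst := himg ▸ mem_univ i
      simpa using this
    choose f hf using hex
    have hinj : Function.Injective f := fun a a' h => h2 a a' (f a) (hf a) (h ▸ hf a')
    refine ⟨Equiv.ofBijective f (Finite.injective_iff_bijective.1 hinj), mem_univ _, ?_⟩
    ext ⟨a, b⟩
    simp only [Equiv.ofBijective_apply, mem_image, mem_univ, true_and, Prod.mk.injEq]
    constructor
    · rintro ⟨_, rfl, rfl⟩; exact hf _
    · intro h; exact ⟨a, rfl, h1 _ _ _ (hf a) h⟩
  · intro σ _
    rw [prod_image]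
    intro a _ b _ h; simpa using congrArg Prod.fst h

/-! ### Stability for Ferrers boards -/

section Stability

/-- A polynomial without zeros in the closed upper half-plane has logarithmic derivative
`∑ 1 / (t - z)`, over its roots `z`, of nonpositive imaginary part there. -/
theorem im_logDeriv_nonpos {f : ℂ[X]} (hf : ∀ t : ℂ, 0 ≤ t.im → f.eval t ≠ 0) {t : ℂ}
    (ht : 0 ≤ t.im) : (f.derivative.eval t / f.eval t).im ≤ 0 := by
  rw [(IsAlgClosed.splits f).eval_derivative_div_eval_of_ne_zero (hf t ht)]
  have key : ∀ s : Multiset ℂ, (∀ z ∈ s, z.im < 0) →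
      ((s.map fun z ↦ 1 / (t - z)).sum).im ≤ 0 := by
    intro s
    induction s using Multiset.induction with
    | empty => simp
    | cons z s ih =>
      intro h
      simp only [Multiset.map_cons, Multiset.sum_cons, Complex.add_im]
      have h1 := ih fun z hz => h z (Multiset.mem_cons_of_mem hz)
      have h2 : z.im < 0 := h z (Multiset.mem_cons_self z s)
      have h3 : (1 / (t - z)).im ≤ 0 := by
        rw [one_div, Complex.inv_im]
        apply div_nonpos_of_nonpos_of_nonneg _ (Complex.normSq_nonneg _)
        simp only [Complex.sub_im]; linarith
      linarith
  refine key _ fun z hz => ?_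
  by_contra! h
  exact hf z h (mem_roots'.1 hz).2

/-- The properties of the matching polynomials `m k` of a board with `a` rows and `b` columns that
are propagated as the board grows. All weights are of the form `X + C c`, so differentiating a
`(k + 1)`-matching drops one of its edges, and each `k`-matching arises in `(a - k) * (b - k)` ways;
this is `deriv`. -/
structure StableSeq (a b : ℕ) (m : ℕ → ℂ[X]) : Prop where
  zero : m 0 = 1
  deriv : ∀ k, derivative (m (k + 1)) = ((a : ℂ[X]) - k) * ((b : ℂ[X]) - k) * m k
  vanish : ∀ k, min a b < k → m k = 0
  ne_zero : ∀ k, k ≤ min a b → ∀ t : ℂ, 0 ≤ t.im → (m k).eval t ≠ 0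

theorem StableSeq.symm {a b : ℕ} {m : ℕ → ℂ[X]} (h : StableSeq a b m) : StableSeq b a m where
  zero := h.zero
  deriv k := by rw [h.deriv, mul_comm ((a : ℂ[X]) - k)]
  vanish k hk := h.vanish k (by rwa [min_comm])
  ne_zero k hk := h.ne_zero k (by rwa [min_comm])

/-- Adding a row of constant weight `X + C c` preserves `StableSeq`. Nonvanishing holds because
`(b - k) * m k / m (k + 1)` is a nonnegative multiple of the logarithmic derivative of `m (k + 1)`,
so that it cannot equal `-1 / (t + c)`, which is in the open upper half-plane. -/
theorem StableSeq.succ {a b : ℕ} {m m' : ℕ → ℂ[X]} (h : StableSeq a b m) {c : ℂ} (hc : 0 < c.im)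
    (h0 : m' 0 = 1)
    (h1 : ∀ k, m' (k + 1) = m (k + 1) + ((b : ℂ[X]) - (k : ℂ[X])) * (X + C c) * m k) :
    StableSeq (a + 1) b m' where
  zero := h0
  deriv k := by
    have hd : ∀ k : ℕ, derivative ((b : ℂ[X]) - (k : ℂ[X])) = 0 := fun k => by simp
    rcases k with _ | k
    · simp only [h1, derivative_add, derivative_mul, h.deriv, hd, h.zero, h0]
      simp
      ring
    · simp only [h1, derivative_add, derivative_mul, h.deriv, hd]
      simp
      ring
  vanish k hk := by
    rcases k with _ | k
    · omega
    · rw [h1, h.vanish (k + 1) (by omega), zero_add]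
      by_cases hb : k = b
      · simp [hb]
      · rw [h.vanish k (by omega), mul_zero]
  ne_zero k hk t ht := by
    rcases k with _ | k
    · simp [h0]
    have hx : 0 < (t + c).im := by simp only [Complex.add_im]; linarith
    have hx0 : t + c ≠ 0 := fun h => by simp [h] at hx
    have hkb : (k : ℝ) < b := by exact_mod_cast (by omega : k < b)
    have hb0 : (b : ℂ) - k ≠ 0 := by
      rw [sub_ne_zero]; exact_mod_cast hkb.ne'
    have hk0 := h.ne_zero k (by omega) t ht
    have hev : (m' (k + 1)).eval t =
        (m (k + 1)).eval t + ((b : ℂ) - k) * (t + c) * (m k).eval t := by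
      simp [h1]
    rw [hev]
    by_cases hka : k + 1 ≤ a
    -- In the other case, `k = a` and `m (k + 1) = 0`: the single term `m k` survives.
    · have hk1 := h.ne_zero (k + 1) (by omega)
      have hlog := im_logDeriv_nonpos hk1 ht
      have hder : (derivative (m (k + 1))).eval t =
          ((a : ℂ) - k) * ((b : ℂ) - k) * (m k).eval t := by
        simp [h.deriv]
      intro hzero
      have hq : (derivative (m (k + 1))).eval t / (m (k + 1)).eval t =
          ((a - k : ℝ) : ℂ) * -(t + c)⁻¹ := by
        rw [hder, div_eq_iff (hk1 t ht)]
        field_simp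
        push_cast
        linear_combination ((a : ℂ) - k) * hzero
      rw [hq, Complex.im_ofReal_mul, Complex.neg_im, Complex.inv_im, neg_div, neg_neg] at hlog
      have hak : (0 : ℝ) < a - k := by
        rw [sub_pos]; exact_mod_cast (by omega : k < a)
      exact hlog.not_gt (mul_pos hak (div_pos hx (Complex.normSq_pos.2 hx0)))
    · rw [h.vanish (k + 1) (by omega), eval_zero, zero_add]
      exact mul_ne_zero (mul_ne_zero hb0 hx0) hk0

/-- `Board w A B`: the board `A ×ˢ B` can be built from the empty one by adding, one by one, rows
and columns on which the weight `w` is constant at the time of the addition, of the form `X + C c`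
with `c` in the upper half-plane. -/
inductive Board {ι κ : Type*} [DecidableEq ι] [DecidableEq κ] (w : ι → κ → ℂ[X]) :
    Finset ι → Finset κ → Prop
  | empty : Board w ∅ ∅
  | row {A : Finset ι} {B : Finset κ} {i : ι} {x : ℂ} : Board w A B → i ∉ A → 0 < x.im →
      (∀ j ∈ B, w i j = X + C x) → Board w (insert i A) B
  | col {A : Finset ι} {B : Finset κ} {j : κ} {y : ℂ} : Board w A B → j ∉ B → 0 < y.im →
      (∀ i ∈ A, w i j = X + C y) → Board w A (insert j B)

theorem Board.stableSeq {ι κ : Type*} [DecidableEq ι] [DecidableEq κ] {w : ι → κ → ℂ[X]}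
    {A : Finset ι} {B : Finset κ} (h : Board w A B) :
    StableSeq A.card B.card (matchSum w A B) := by
  induction h with
  | empty =>
    have hv : ∀ k, matchSum w ∅ ∅ (k + 1) = 0 := fun k => matchSum_eq_zero w (by simp)
    refine ⟨matchSum_zero .., fun k => ?_, fun k hk => ?_, fun k hk t _ => ?_⟩
    · rcases k with _ | k <;> simp [hv]
    · rcases k with _ | k
      · simp at hk
      · exact hv k
    · obtain rfl : k = 0 := by simpa using hk
      simp [matchSum_zero]
  | row _ hi hx hw ih =>
    rw [card_insert_of_notMem hi]
    exact ih.succ hx (matchSum_zero ..) (matchSum_insert_left w hi hw)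
  | col _ hj hy hw ih =>
    rw [card_insert_of_notMem hj]
    exact (ih.symm.succ hy (matchSum_zero ..) (matchSum_insert_right w hj hw)).symm

theorem Board.cols {ι κ : Type*} [DecidableEq ι] [DecidableEq κ] {w : ι → κ → ℂ[X]}
    {A : Finset ι} {B D : Finset κ} (h : Board w A B) (hBD : Disjoint D B) {y : κ → ℂ}
    (hy : ∀ j, 0 < (y j).im) (hw : ∀ j ∈ D, ∀ i ∈ A, w i j = X + C (y j)) :
    Board w A (D ∪ B) := by
  induction D using Finset.induction_on with
  | empty => simpa
  | insert j D hj ih =>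
    rw [insert_union]
    refine Board.col (ih (disjoint_of_subset_left (subset_insert _ _) hBD)
      fun j' hj' => hw j' (mem_insert_of_mem hj')) ?_ (hy j) (hw j (mem_insert_self _ _))
    rw [mem_union, not_or]
    exact ⟨hj, disjoint_left.1 hBD (mem_insert_self _ _)⟩

/-- Column `j` is `y j` in its first `p j` rows and `x` below. Row `i` is constant on the columns with
`p j ≤ i`, and column `j` is constant on the rows `i < p j`, so the board is built by adding row `i`
between the columns with `p j ≤ i` and those with `p j > i`. -/
theorem perm_ferrers_ne_zero {n : ℕ} {p : Fin n → ℕ} (hp : ∀ j, p j ≤ n) {x : ℂ} {y : Fin n → ℂ}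
    (hx : 0 < x.im) (hy : ∀ j, 0 < (y j).im) :
    perm (fun i j : Fin n => if (i : ℕ) < p j then y j else x) ≠ 0 := by
  set w : Matrix (Fin n) (Fin n) ℂ[X] :=
    fun i j => X + C (if (i : ℕ) < p j then y j else x) with hwdef
  have hB : ∀ m ≤ n, Board w {i | (i : ℕ) < m} {j | p j ≤ m} := by
    intro m
    induction m with
    | zero =>
      intro _
      have := (Board.empty (w := w)).cols (D := {j | p j ≤ 0}) (by simp) hy (by simp)
      simpa using this
    | succ m ih =>
      intro hm
      have h1 := (ih (by omega)).row (i := ⟨m, hm⟩) (by simp) hx (by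
        intro j hj
        simp only [mem_filter, mem_univ, true_and] at hj
        simp [hwdef, hj.not_gt])
      have h2 := h1.cols (D := {j | p j = m + 1})
        (disjoint_left.2 fun j hj hj' => by simp at hj hj'; omega) hy (by
          intro j hj i hi
          have : (i : ℕ) < p j := by
            simp only [mem_filter, mem_univ, true_and, mem_insert, Fin.ext_iff] at hi hj
            omega
          simp [hwdef, this])
      convert h2 using 1
      · ext i; simp [Fin.ext_iff]; omega
      · ext j; simp; omega
  have hfin := (hB n le_rfl).stableSeq
  have e1 : ({i | (i : ℕ) < n} : Finset (Fin n)) = univ := by ext i; simp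
  have e2 : ({j | p j ≤ n} : Finset (Fin n)) = univ := by ext i; simp [hp]
  rw [e1, e2] at hfin
  have := hfin.ne_zero n (by simp) 0 (by simp)
  rw [matchSum_univ] at this
  convert this using 1
  simp [perm, hwdef, eval_finsetSum, eval_prod]

end Stability

/-! ### From Ferrers boards to monotone columns -/

section Columns

/-- As a function of any one column, the permanent is linear. -/
theorem exists_linearMap_perm_updateCol {n : ℕ} {R : Type*} [CommRing R]
    (H : Matrix (Fin n) (Fin n) R) (j : Fin n) :
    ∃ L : (Fin n → R) →ₗ[R] R, ∀ v, perm (H.updateCol j v) = L v := by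
  refine ⟨∑ σ : Equiv.Perm (Fin n), (∏ i ∈ univ.erase (σ.symm j), H i (σ i)) •
    LinearMap.proj (σ.symm j), fun v => ?_⟩
  simp only [perm, LinearMap.sum_apply, LinearMap.smul_apply, LinearMap.proj_apply, smul_eq_mul]
  refine sum_congr rfl fun σ _ => ?_
  rw [← mul_prod_erase univ _ (mem_univ (σ.symm j)), mul_comm]
  congr 1
  · refine prod_congr rfl fun i hi => ?_
    rw [Matrix.updateCol_ne]
    rintro rfl
    simp at hi
  · simp

theorem perm_mul_cols {n : ℕ} {R : Type*} [CommRing R] (c : Fin n → R)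
    (H : Matrix (Fin n) (Fin n) R) :
    perm (fun i j => c j * H i j) = (∏ j, c j) * perm H := by
  simp only [perm, prod_mul_distrib, mul_sum]
  exact sum_congr rfl fun σ _ => by rw [Equiv.prod_comp σ c]

/-- `perm_ferrers_ne_zero` for columns `z j + 1_{i < p j}`: dividing column `j` by `z j` leaves the
two values `1` and `1 + 1 / z j`, which a single rotation moves into the upper half-plane. -/
theorem perm_threshold_ne_zero {n : ℕ} {p : Fin n → ℕ} (hp : ∀ j, p j ≤ n) {z : Fin n → ℂ}
    (hz : ∀ j, 0 < (z j).im) :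
    perm (fun i j : Fin n => z j + if (i : ℕ) < p j then 1 else 0) ≠ 0 := by
  have hz0 : ∀ j, z j ≠ 0 := fun j h => by have := hz j; simp [h] at this
  -- The values `1 + 1 / z j` lie in the open lower half-plane, so multiplication by `-1` moves them
  -- to the upper one; the perturbation `ε * I` moves `-1` there as well, and is harmless to the
  -- finitely many others when `ε` is small.
  obtain ⟨ε, hε, hε0⟩ : ∃ ε : ℝ, (∀ j, 0 < ((-1 + ε * Complex.I) * (1 + (z j)⁻¹)).im) ∧ 0 < ε := by
    have hev : ∀ᶠ ε : ℝ in nhdsWithin 0 (Set.Ioi 0),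
        ∀ j, 0 < ((-1 + ε * Complex.I) * (1 + (z j)⁻¹)).im := by
      rw [Filter.eventually_all]
      intro j
      apply Filter.Eventually.filter_mono nhdsWithin_le_nhds
      have hc : Continuous fun ε : ℝ => ((-1 + ε * Complex.I) * (1 + (z j)⁻¹)).im := by fun_prop
      refine hc.continuousAt.eventually (lt_mem_nhds ?_)
      have : 0 < (z j).im / Complex.normSq (z j) :=
        div_pos (hz j) (Complex.normSq_pos.2 (hz0 j))
      simpa [Complex.inv_im, neg_div] using this
    exact (hev.and self_mem_nhdsWithin).exists
  have hkey := perm_ferrers_ne_zero hp (x := -1 + ε * Complex.I)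
    (y := fun j => (-1 + ε * Complex.I) * (1 + (z j)⁻¹)) (by simpa using hε0) hε
  have hmat : (fun i j : Fin n => if (i : ℕ) < p j then (-1 + ε * Complex.I) * (1 + (z j)⁻¹)
      else -1 + ε * Complex.I) = fun (i j : Fin n) => ((-1 + ε * Complex.I) * (z j)⁻¹) *
        (z j + if (i : ℕ) < p j then 1 else 0) := by
    ext i j
    have := hz0 j
    split_ifs <;> field_simp
    ring
  rw [hmat] at hkey
  intro h0
  refine hkey ((perm_mul_cols (fun j => (-1 + ε * Complex.I) * (z j)⁻¹) _).trans ?_)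
  rw [h0, mul_zero]

/-- An antitone vector is a constant plus a nonnegative combination of threshold vectors. -/
theorem antitone_eq_sum_threshold {n : ℕ} {a : Fin n → ℝ} (ha : Antitone a) :
    ∃ (c : ℝ) (d : ℕ → ℝ), (∀ p, 0 ≤ d p) ∧
      ∀ i : Fin n, a i = c + ∑ p ∈ range n, d p * if (i : ℕ) < p + 1 then 1 else 0 := by
  rcases n with _ | n
  · exact ⟨0, 0, by simp, fun i => i.elim0⟩
  -- Extend `a` to `ℕ` by its last value; the coefficients are the consecutive differences.
  set b : ℕ → ℝ := fun k => a ⟨min k n, by omega⟩ with hb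
  have hba : Antitone b := fun k l hkl => ha (by simp only [Fin.mk_le_mk]; omega)
  refine ⟨b (n + 1), fun p => b p - b (p + 1), fun p => sub_nonneg.2 (hba p.le_succ), fun i => ?_⟩
  have h1 : ∑ p ∈ range (n + 1), (b p - b (p + 1)) * (if (i : ℕ) < p + 1 then (1 : ℝ) else 0) =
      ∑ p ∈ Ico (i : ℕ) (n + 1), (b p - b (p + 1)) := by
    simp only [mul_ite, mul_one, mul_zero]
    rw [← sum_filter]
    refine sum_congr ?_ fun _ _ => rfl
    ext p; simp; omega
  have h2 : ∑ p ∈ Ico (i : ℕ) (n + 1), (b p - b (p + 1)) = b i - b (n + 1) := by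
    have := sum_Ico_sub b (m := (i : ℕ)) (n := n + 1) (by omega)
    rw [← neg_inj, neg_sub, ← this, ← sum_neg_distrib]
    exact sum_congr rfl fun _ _ => by ring
  have h3 : b i = a i := by
    simp only [hb]
    congr 1
    ext
    simp; omega
  rw [h1, h2, h3]; ring

/-- If a linear functional `L` vanishes at no `z + 1_{i < p}` with `z` in the upper half-plane, it
vanishes at no `z + a` with `a` antitone either: the hypothesis says that `L 1 ≠ 0` and
`Im (L 1_{i < p} / L 1) ≥ 0` for all `p`, and the latter passes to nonnegative combinations. -/
theorem linearMap_antitone_ne_zero {n : ℕ} (L : (Fin n → ℂ) →ₗ[ℂ] ℂ)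
    (hL : ∀ p ≤ n, ∀ z : ℂ, 0 < z.im →
      L (fun i => z + ((if (i : ℕ) < p then 1 else 0 : ℝ) : ℂ)) ≠ 0)
    {a : Fin n → ℝ} (ha : Antitone a) {z : ℂ} (hz : 0 < z.im) :
    L (fun i => z + (a i : ℂ)) ≠ 0 := by
  set T : ℕ → Fin n → ℂ := fun p i => ((if (i : ℕ) < p then 1 else 0 : ℝ) : ℂ) with hT
  have hsplit : ∀ p (z : ℂ), L (fun i => z + T p i) = z * L 1 + L (T p) := by
    intro p z
    rw [← smul_eq_mul, ← map_smul, ← map_add]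
    congr 1; ext i; simp
  have hl : L 1 ≠ 0 := by
    intro h
    refine hL 0 n.zero_le Complex.I (by simp) ((hsplit 0 _).trans ?_)
    have : T 0 = 0 := by ext i; simp [hT]
    rw [h, this]; simp
  have hT0 : ∀ p ≤ n, 0 ≤ (L (T p) / L 1).im := by
    intro p hp
    by_contra! h
    refine hL p hp (-(L (T p) / L 1)) (by simpa using h) ((hsplit p _).trans ?_)
    field_simp
    ring
  obtain ⟨c, d, hd, hsum⟩ := antitone_eq_sum_threshold ha
  have hdecomp : (fun i => z + (a i : ℂ)) =
      (z + c) • (1 : Fin n → ℂ) + ∑ p ∈ range n, (d p : ℂ) • T (p + 1) := by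
    ext i
    simp only [hsum i, hT, Pi.add_apply, Pi.smul_apply, Pi.one_apply, Finset.sum_apply, smul_eq_mul,
      mul_one, add_assoc]
    push_cast
    rfl
  rw [hdecomp, map_add, map_sum, map_smul]
  intro h0
  have h1 : z + c + ∑ p ∈ range n, (d p : ℂ) * (L (T (p + 1)) / L 1) = 0 := by
    have : (z + c) * L 1 + ∑ p ∈ range n, (d p : ℂ) * L (T (p + 1)) = 0 := by
      simpa using h0
    have h2 := congrArg (· / L 1) this
    simp only [add_div, sum_div, zero_div] at h2
    rw [mul_div_cancel_right₀ _ hl] at h2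
    simpa only [mul_div_assoc] using h2
  have h2 := congrArg Complex.im h1
  simp only [Complex.add_im, Complex.im_sum, Complex.im_ofReal_mul, Complex.ofReal_im,
    Complex.zero_im, add_zero] at h2
  have h3 : 0 ≤ ∑ p ∈ range n, d p * (L (T (p + 1)) / L 1).im :=
    sum_nonneg fun p hp => mul_nonneg (hd p) (hT0 _ (mem_range.1 hp))
  linarith

/-- Stability of the polynomial `per (z j + a i j)` when the columns of `a` decrease; here `a j` is
the `j`-th column. -/
theorem perm_antitone_ne_zero {n : ℕ} {a : Fin n → Fin n → ℝ} (ha : ∀ j, Antitone (a j))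
    {z : Fin n → ℂ} (hz : ∀ j, 0 < (z j).im) :
    perm (fun i j => z j + (a j i : ℂ)) ≠ 0 := by
  -- Threshold columns are replaced by antitone ones one at a time: `D` is the set of columns that
  -- are already arbitrary.
  have key : ∀ (D : Finset (Fin n)) (a : Fin n → Fin n → ℝ) (z : Fin n → ℂ),
      (∀ j, 0 < (z j).im) → (∀ j ∈ D, Antitone (a j)) →
      (∀ j ∉ D, ∃ p ≤ n, a j = fun i : Fin n => if (i : ℕ) < p then 1 else 0) →
      perm (fun i j => z j + (a j i : ℂ)) ≠ 0 := by
    intro D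
    induction D using Finset.induction_on with
    | empty =>
      intro a z hz _ h
      choose p hp hpa using fun j => h j (notMem_empty j)
      have heq : (fun i j : Fin n => z j + (a j i : ℂ)) =
          fun (i j : Fin n) => z j + if (i : ℕ) < p j then 1 else 0 := by
        ext i j
        rw [hpa]
        split_ifs with h <;> simpa using h
      rw [heq]
      exact perm_threshold_ne_zero hp hz
    | insert j D hj ih =>
      intro a z hz ha hthr
      obtain ⟨L, hL⟩ := exists_linearMap_perm_updateCol (fun i j => z j + (a j i : ℂ)) j
      have hupd : ∀ (z' : ℂ) (v : Fin n → ℝ), L (fun i => z' + (v i : ℂ)) =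
          perm (fun i k => Function.update z j z' k + (Function.update a j v k i : ℂ)) := by
        intro z' v
        rw [← hL]
        congr 1
        ext i k
        refine Matrix.updateCol_apply.trans ?_
        by_cases hk : k = j
        · subst hk; simp
        · simp [hk]
      have := linearMap_antitone_ne_zero L (a := a j) ?_ (ha j (mem_insert_self _ _)) (hz j)
      · rw [hupd] at this
        simpa using this
      · intro p hp z' hz'
        rw [hupd z' (fun i : Fin n => (if (i : ℕ) < p then 1 else 0 : ℝ))]
        apply ih
        · intro k
          by_cases hk : k = j
          · subst hk; simpa
          · simpa [hk] using hz k
        · intro k hk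
          have : k ≠ j := fun h => hj (h ▸ hk)
          simpa [this] using ha k (mem_insert_of_mem hk)
        · intro k hk
          by_cases hkj : k = j
          · subst hkj; exact ⟨p, hp, by simp⟩
          · simpa [hkj] using hthr k (by simp [hkj, hk])
  exact key univ a z hz (fun j _ => ha j) (by simp)

end Columns

/-! ### The Rayleigh inequality -/

/-- The Rayleigh inequality for a real bivariate polynomial `a₀ + b₀ z + c₀ w + d₀ z w` that is a
limit of stable ones. If it failed, the solution `z` of the limit equation at `w = I` would lie in
the open upper half-plane, hence so would that of a nearby stable polynomial. -/
theorem mul_le_mul_of_stable {a b c d : ℝ → ℂ} (ha : Continuous a) (hb : Continuous b)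
    (hc : Continuous c) (hd : Continuous d) {a₀ b₀ c₀ d₀ : ℝ} (ha₀ : a 0 = a₀) (hb₀ : b 0 = b₀)
    (hc₀ : c 0 = c₀) (hd₀ : d 0 = d₀)
    (h : ∀ ε : ℝ, 0 < ε → ∀ z w : ℂ, 0 < z.im → 0 < w.im →
      a ε + z * b ε + w * c ε + z * w * d ε ≠ 0) :
    d₀ * a₀ ≤ b₀ * c₀ := by
  by_contra! hlt
  have hden : b 0 + Complex.I * d 0 ≠ 0 := by
    rw [hb₀, hd₀]
    intro h0
    have h1 := congrArg Complex.re h0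
    have h2 := congrArg Complex.im h0
    simp at h1 h2
    simp [h1, h2] at hlt
  set ζ : ℝ → ℂ := fun ε => -(a ε + Complex.I * c ε) / (b ε + Complex.I * d ε) with hζ
  have hζc : ContinuousAt ζ 0 := by
    refine ContinuousAt.div (f := fun ε => -(a ε + Complex.I * c ε))
      (g := fun ε => b ε + Complex.I * d ε) ?_ ?_ hden <;> fun_prop
  have hζ0 : 0 < (ζ 0).im := by
    have hn : 0 < Complex.normSq (b 0 + Complex.I * d 0) := Complex.normSq_pos.2 hden
    have : (ζ 0).im = (d₀ * a₀ - b₀ * c₀) / Complex.normSq (b 0 + Complex.I * d 0) := by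
      simp only [hζ, Complex.div_im]
      rw [← sub_div]
      congr 1
      simp [ha₀, hb₀, hc₀, hd₀]
      ring
    rw [this]
    exact div_pos (by linarith) hn
  have e1 : ∀ᶠ ε in nhds (0 : ℝ), 0 < (ζ ε).im :=
    (Complex.continuous_im.continuousAt.comp hζc).eventually (lt_mem_nhds hζ0)
  have e2 : ∀ᶠ ε in nhds (0 : ℝ), b ε + Complex.I * d ε ≠ 0 :=
    ContinuousAt.eventually_ne (by fun_prop) hden
  obtain ⟨ε, ⟨hε1, hε2⟩, hε⟩ := (((e1.and e2).filter_mono nhdsWithin_le_nhds).and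
    (self_mem_nhdsWithin (s := Set.Ioi (0 : ℝ)))).exists
  refine h ε hε (ζ ε) Complex.I hε1 (by simp) ?_
  simp only [hζ]
  field_simp
  ring

/-- For a monotone column matrix `A`, `S ⊆ [n]` and distinct `i, j ∉ S`:
`per(A_{S∪{i}}) per(A_{S∪{j}}) ≥ per(A_{S∪{i,j}}) per(A_S)`. -/
theorem per_negatively_associated (n : ℕ) (A : Matrix (Fin n) (Fin n) ℝ)
    (hA : MonotoneColumn A) (S : Finset (Fin n)) (i j : Fin n)
    (hi : i ∉ S) (hj : j ∉ S) (hij : i ≠ j) :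
    perm (colOnes A (S ∪ {i, j})) * perm (colOnes A S) ≤
      perm (colOnes A (insert i S)) * perm (colOnes A (insert j S)) := by
  set B : Matrix (Fin n) (Fin n) ℝ := colOnes A S with hB
  have hBanti : ∀ k, Antitone fun r => B r k := by
    intro k r r' hr
    by_cases hk : k ∈ S
    · simp [hB, colOnes, hk]
    · simpa [hB, colOnes, hk] using hA r r' k hr
  -- `F ε u v` has columns `u`, `v` at `i`, `j`, and `B` shifted by `ε * I` elsewhere; the four
  -- permanents of the statement are the values of `F 0` at `u ∈ {B_i, 1}`, `v ∈ {B_j, 1}`.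
  set G : ℝ → Matrix (Fin n) (Fin n) ℂ := fun ε r k => ε * Complex.I + (B r k : ℂ) with hG
  set F : ℝ → (Fin n → ℂ) → (Fin n → ℂ) → ℂ :=
    fun ε u v => perm (((G ε).updateCol i u).updateCol j v) with hF
  set Bi : Fin n → ℂ := fun r => B r i with hBi
  set Bj : Fin n → ℂ := fun r => B r j with hBj
  have hupd : ∀ (M : Matrix (Fin n) (Fin n) ℂ) u v r k, (M.updateCol i u).updateCol j v r k =
      if k = j then v r else if k = i then u r else M r k := by
    intro M u v r k
    rw [Matrix.updateCol_apply, Matrix.updateCol_apply]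
  have hFcont : ∀ u v, Continuous fun ε => F ε u v := by
    intro u v
    simp only [hF, perm]
    refine continuous_finsetSum _ fun σ _ => continuous_finsetProd _ fun r _ => ?_
    by_cases h1 : σ r = j
    · simp only [h1, Matrix.updateCol_self]; fun_prop
    · by_cases h2 : σ r = i
      · simp only [h2, Matrix.updateCol_ne hij, Matrix.updateCol_self]; fun_prop
      · simp only [Matrix.updateCol_ne h1, hG]; fun_prop
  have hlinr : ∀ ε u (w : ℂ) v, F ε u (w • 1 + v) = w * F ε u 1 + F ε u v := by
    intro ε u w v
    obtain ⟨L, hL⟩ := exists_linearMap_perm_updateCol ((G ε).updateCol i u) j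
    simp only [hF, hL, map_add, map_smul, smul_eq_mul]
  have hlinl : ∀ ε (w : ℂ) u v, F ε (w • 1 + u) v = w * F ε 1 v + F ε u v := by
    intro ε w u v
    obtain ⟨L, hL⟩ := exists_linearMap_perm_updateCol ((G ε).updateCol j v) i
    have hcomm : ∀ u, ((G ε).updateCol i u).updateCol j v =
        ((G ε).updateCol j v).updateCol i u := by
      intro u; ext r k
      simp only [Matrix.updateCol_apply]
      grind
    simp only [hF, hcomm, hL, map_add, map_smul, smul_eq_mul]
  have hreal : ∀ (M : Matrix (Fin n) (Fin n) ℝ) u v,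
      ((G 0).updateCol i u).updateCol j v = M.map (fun x : ℝ => (x : ℂ)) →
      F 0 u v = (perm M : ℝ) := by
    intro M u v h
    simp only [hF, h, perm, Matrix.map_apply]
    push_cast
    rfl
  refine mul_le_mul_of_stable (hFcont Bi Bj) (hFcont 1 Bj) (hFcont Bi 1) (hFcont 1 1)
    (hreal _ _ _ ?_) (hreal _ _ _ ?_) (hreal _ _ _ ?_) (hreal _ _ _ ?_) ?_
  · ext r k
    rw [hupd, Matrix.map_apply]
    split_ifs with h1 h2
    · rw [h1]
    · rw [h2]
    · simp [hG]
  · ext r k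
    rw [hupd, Matrix.map_apply]
    split_ifs with h1 h2
    · simp [h1, hBj, hB, colOnes, hij.symm]
    · simp [h2, colOnes]
    · simp [hG, hB, colOnes, h2]
  · ext r k
    rw [hupd, Matrix.map_apply]
    split_ifs with h1 h2
    · simp [h1, colOnes]
    · simp [h2, hBi, hB, colOnes, hij]
    · simp [hG, hB, colOnes, h1]
  · ext r k
    rw [hupd, Matrix.map_apply]
    split_ifs with h1 h2
    · simp [h1, colOnes]
    · simp [h2, colOnes]
    · simp [hG, hB, colOnes, h1, h2]
  · intro ε hε z w hz hw
    have hne := perm_antitone_ne_zero hBanti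
      (z := fun k => if k = i then z else if k = j then w else ε * Complex.I) (by
        intro k
        split_ifs <;> first | assumption | simpa using hε)
    have hexp : F ε (z • 1 + Bi) (w • 1 + Bj) =
        F ε Bi Bj + z * F ε 1 Bj + w * F ε Bi 1 + z * w * F ε 1 1 := by
      rw [hlinr, hlinl, hlinl]; ring
    rw [← hexp]
    convert hne using 1
    simp only [hF]
    congr 1
    ext r k
    rw [hupd]
    split_ifs with h1 h2 h2
    · exact absurd (h2.symm.trans h1) hij
    · simp [hBj, h1]
    · simp [hBi, h2]
    · rfl
end

section
/- Let A be an n-by-n monotone column matrix with nonnegative entries, and for S ⊆ {1,…,n} let A_S denote the matrix obtained from A by replacing each column indexed by S with a column of all ones. Then for all S, T ⊆ {1,…,n}: per(A_S)·per(A_T) ≥ per(A_{S∪T})·per(A_{S∩T}). Moreover, per(A) ≤ s_1 s_2 ⋯ s_n · n!/n^n, where s_i is the sum of the entries in the i-th column of A. -/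
/-! ### Permanents and Ferrers boards -/

theorem perm_submatrix {n : ℕ} {R : Type*} [CommRing R] (M : Matrix (Fin n) (Fin n) R)
    (α β : Equiv.Perm (Fin n)) : perm (fun i j => M (α i) (β j)) = perm M := by
  unfold perm
  refine Fintype.sum_equiv ((Equiv.mulLeft β).trans (Equiv.mulRight α⁻¹)) _ _ fun σ => ?_
  refine Fintype.prod_equiv α _ _ fun i => ?_
  simp

theorem perm_transpose {n : ℕ} {R : Type*} [CommRing R] (M : Matrix (Fin n) (Fin n) R) :
    perm (fun i j => M j i) = perm M := by
  unfold perm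
  refine Fintype.sum_equiv (Equiv.inv _) _ _ fun σ => ?_
  refine Fintype.prod_equiv σ _ _ fun i => ?_
  simp

/-- Expansion along row `0` and column `0` when row `0` is constant: a permutation of `n + 1`
rows either fixes `0`, or arises from one of `n` rows by rerouting a single row `i` to
column `0`. -/
theorem perm_succ_of_row_const {n : ℕ} {R : Type*} [CommRing R]
    (M : Matrix (Fin (n + 1)) (Fin (n + 1)) R) (c : R) (hM : ∀ j, M 0 j = c) :
    perm M = c * (perm (fun i j => M (Fin.succ i) (Fin.succ j)) +
      ∑ e : Equiv.Perm (Fin n), ∑ i, M (Fin.succ i) 0 *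
        ∏ k ∈ Finset.univ.erase i, M (Fin.succ k) (Fin.succ (e k))) := by
  unfold perm
  rw [← Equiv.sum_comp Equiv.Perm.decomposeFin.symm, Fintype.sum_prod_type, Fin.sum_univ_succ,
    mul_add]
  congr 1
  · rw [Finset.mul_sum]
    refine Finset.sum_congr rfl fun e _ => ?_
    rw [Fin.prod_univ_succ]
    simp [hM]
  · rw [Finset.sum_comm, Finset.mul_sum]
    refine Finset.sum_congr rfl fun e _ => ?_
    rw [Finset.mul_sum, ← Equiv.sum_comp e]
    refine Finset.sum_congr rfl fun i _ => ?_
    rw [Fin.prod_univ_succ, hM, ← Finset.mul_prod_erase _ _ (Finset.mem_univ i)]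
    congr 2
    · simp
    · refine Finset.prod_congr rfl fun k hk => ?_
      have hki : k ≠ i := Finset.ne_of_mem_erase hk
      rw [Equiv.Perm.decomposeFin_symm_apply_succ, Equiv.swap_apply_of_ne_of_ne]
      · exact Fin.succ_ne_zero _
      · simpa using hki

/-- A polynomial without zeros in the closed upper half-plane has a logarithmic derivative at `0`
of nonpositive imaginary part: it is the sum of `-1 / r` over the roots `r`. -/
theorem im_logDeriv_nonpos_s19 (P : Polynomial ℂ) (hP : ∀ t : ℂ, 0 ≤ t.im → P.eval t ≠ 0) :
    (P.derivative.eval 0 / P.eval 0).im ≤ 0 := by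
  rw [(IsAlgClosed.splits P).eval_derivative_div_eval_of_ne_zero
    (hP 0 (by simp))]
  have key : ∀ s : Multiset ℂ, (∀ r ∈ s, r.im < 0) →
      (s.map fun z => 1 / ((0 : ℂ) - z)).sum.im ≤ 0 := by
    intro s
    induction s using Multiset.induction with
    | empty => simp
    | cons a s ih =>
      intro h
      have h1 := ih fun r hr => h r (Multiset.mem_cons_of_mem hr)
      have h2 := h a (Multiset.mem_cons_self a s)
      rw [Multiset.map_cons, Multiset.sum_cons, Complex.add_im]
      have h3 : (1 / ((0 : ℂ) - a)).im ≤ 0 := by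
        rw [zero_sub, one_div, Complex.inv_im]
        apply div_nonpos_of_nonpos_of_nonneg _ (Complex.normSq_nonneg _)
        simp [h2.le]
      linarith
  refine key _ fun r hr => ?_
  by_contra! h
  exact hP r h (Polynomial.isRoot_of_mem_roots hr)

open Classical in
/-- The two-variable matrix of a board `P`: the entry at `(i, j)` is the column variable `x j` if
`(i, j)` lies on the board, and the row variable `y i` otherwise. -/
noncomputable def ferrersMat {n : ℕ} (P : Fin n → Fin n → Prop) (x y : Fin n → ℂ) :
    Matrix (Fin n) (Fin n) ℂ :=
  fun i j => if P i j then x j else y i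

open Classical in
/-- The inductive step of stability, when row `0` misses the board and column `0` contains every
other column of the board. With `N` the board matrix after deleting both, `T` the rows of column
`0`, and `∂` the sum of the derivatives of `per N` in all the `x j` and in the `y i` with `i ∈ T`,
`per = y₀ ((1 + #Tᶜ) per N + x₀ ∂ per N)`. A zero of this would give
`∂ per N / per N = -(1 + #Tᶜ) / x₀`, of positive imaginary part, against `im_logDeriv_nonpos`. -/
theorem ferrersMat_step {n : ℕ} (P : Fin (n + 1) → Fin (n + 1) → Prop)
    (h0 : ∀ j, ¬ P 0 j) (hmax : ∀ i j, P i j → P i 0)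
    (hN : ∀ x y : Fin n → ℂ, (∀ j, 0 < (x j).im) → (∀ i, 0 < (y i).im) →
      perm (ferrersMat (fun i j => P i.succ j.succ) x y) ≠ 0)
    (x y : Fin (n + 1) → ℂ) (hx : ∀ j, 0 < (x j).im) (hy : ∀ i, 0 < (y i).im) :
    perm (ferrersMat P x y) ≠ 0 := by
  set N := ferrersMat (fun i j => P (Fin.succ i) (Fin.succ j)) (fun j => x j.succ)
    (fun i => y i.succ) with hNdef
  set T : Finset (Fin n) := Finset.univ.filter fun i => P i.succ 0 with hT
  -- `Q t` is `per N` with `t` added to every `x j` and to the `y i` with `i ∈ T`: as the column sets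
  -- lie inside `T`, this adds `t` to exactly the rows in `T`.
  let Q : Polynomial ℂ := ∑ e : Equiv.Perm (Fin n), ∏ k,
    (Polynomial.C (N k (e k)) + if k ∈ T then Polynomial.X else 0)
  set D : ℂ := ∑ e : Equiv.Perm (Fin n), ∑ i ∈ T, ∏ k ∈ Finset.univ.erase i, N k (e k) with hD
  have hQ0 : Q.eval 0 = perm N := by
    simp only [Q, perm, Polynomial.eval_finsetSum, Polynomial.eval_prod]
    refine Finset.sum_congr rfl fun e _ => Finset.prod_congr rfl fun k _ => ?_
    split_ifs <;> simp
  have hQ' : Q.derivative.eval 0 = D := by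
    simp only [Q, hD, Polynomial.derivative_sum, Polynomial.derivative_prod_finset,
      Polynomial.eval_finsetSum, Polynomial.eval_mul, Polynomial.eval_prod]
    refine Finset.sum_congr rfl fun e _ => ?_
    rw [← Finset.sum_filter_add_sum_filter_not Finset.univ (· ∈ T)]
    rw [Finset.sum_eq_zero (s := Finset.univ.filter (· ∉ T)), add_zero]
    · simp only [Finset.filter_mem_eq_inter, Finset.univ_inter]
      refine Finset.sum_congr rfl fun i hi => ?_
      simp only [hi, if_true, Polynomial.derivative_add, Polynomial.derivative_C, zero_add,
        Polynomial.derivative_X, Polynomial.eval_one, mul_one]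
      refine Finset.prod_congr rfl fun k _ => ?_
      split_ifs <;> simp
    · intro i hi
      simp [(Finset.mem_filter.1 hi).2]
  have hQne : ∀ t : ℂ, 0 ≤ t.im → Q.eval t ≠ 0 := by
    intro t ht
    have := hN (fun j => x j.succ + t) (fun i => y i.succ + if i ∈ T then t else 0)
      (fun j => by have := hx j.succ; simp; linarith)
      (fun i => by have := hy i.succ; split_ifs <;> simp <;> linarith)
    convert this using 1
    simp only [Q, perm, Polynomial.eval_finsetSum, Polynomial.eval_prod]
    refine Finset.sum_congr rfl fun e _ => Finset.prod_congr rfl fun k _ => ?_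
    simp only [hNdef, ferrersMat]
    by_cases hk : P k.succ (e k).succ
    · have : k ∈ T := by simp [hT, hmax _ _ hk]
      simp [hk, this]
    · simp only [hk, if_false]
      split_ifs <;> simp
  have him := im_logDeriv_nonpos_s19 Q hQne
  have hne := hQne 0 (by simp)
  rw [hQ0, hQ'] at him
  rw [hQ0] at hne
  have hexp : perm (ferrersMat P x y) =
      y 0 * ((1 + (Tᶜ.card : ℂ)) * perm N + x 0 * D) := by
    rw [perm_succ_of_row_const _ (y 0) (fun j => by simp [ferrersMat, h0])]
    have e1 : (fun i j => ferrersMat P x y (Fin.succ i) (Fin.succ j)) = N := by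
      ext i j; simp [hNdef, ferrersMat]
    have e2 : ∀ i j, ferrersMat P x y (Fin.succ i) (Fin.succ j) = N i j := fun i j => by
      simp [hNdef, ferrersMat]
    rw [e1]
    simp only [e2]
    rw [add_mul, one_mul, add_assoc]
    congr 2
    rw [hD, perm, Finset.mul_sum, Finset.mul_sum, ← Finset.sum_add_distrib]
    refine Finset.sum_congr rfl fun e _ => ?_
    rw [← Finset.sum_add_sum_compl T, add_comm, Finset.mul_sum]
    congr 1
    -- For `i ∉ T` row `i` of `N` is constant, so the rerouted product is the original one.
    · rw [← nsmul_eq_mul, ← Finset.sum_const]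
      refine Finset.sum_congr rfl fun i hi => ?_
      have hi' : ¬ P i.succ 0 := by simpa [hT] using hi
      rw [← Finset.mul_prod_erase _ _ (Finset.mem_univ i)]
      have : ¬ P i.succ (e i).succ := fun h => hi' (hmax _ _ h)
      simp [hNdef, ferrersMat, hi', this]
    · refine Finset.sum_congr rfl fun i hi => ?_
      have hi' : P i.succ 0 := by simpa [hT] using hi
      simp [ferrersMat, hi']
  rw [hexp]
  have hx0 := hx 0
  have hx0' : x 0 ≠ 0 := fun h => by simp [h] at hx0
  have hy0 := hy 0
  have hy0' : y 0 ≠ 0 := fun h => by simp [h] at hy0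
  refine mul_ne_zero hy0' fun h => ?_
  have hDN : D / perm N = -((1 + (Tᶜ.card : ℝ) : ℝ) : ℂ) * (x 0)⁻¹ := by
    field_simp
    push_cast
    linear_combination h
  rw [hDN, ← Complex.ofReal_neg, Complex.im_ofReal_mul,
    Complex.inv_im] at him
  have h1 : 0 < Complex.normSq (x 0) := Complex.normSq_pos.2 hx0'
  have h2 : 0 < (x 0).im / Complex.normSq (x 0) := div_pos hx0 h1
  have h3 : (0 : ℝ) ≤ (Tᶜ.card : ℝ) := Nat.cast_nonneg _
  rw [neg_div] at him
  nlinarith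

open Classical in
/-- If the columns of a board form a chain (stated as the absence of a `2 × 2` obstruction, a
condition invariant under transposition and complement), one column contains all the others. -/
theorem exists_max_col {n : ℕ} (P : Fin (n + 1) → Fin (n + 1) → Prop)
    (hP : ∀ i i' j j', P i j → P i' j' → P i j' ∨ P i' j) :
    ∃ c, ∀ i j, P i j → P i c := by
  obtain ⟨c, -, hc⟩ := Finset.exists_max_image (Finset.univ : Finset (Fin (n + 1)))
    (fun j => (Finset.univ.filter fun i => P i j).card) Finset.univ_nonempty
  refine ⟨c, fun i j hij => ?_⟩
  by_contra hic
  refine absurd (hc j (Finset.mem_univ j)) (not_le.2 (Finset.card_lt_card ?_))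
  rw [Finset.ssubset_iff_of_subset]
  · exact ⟨i, by simpa using hij, by simpa using hic⟩
  · intro i' hi'
    simp only [Finset.mem_filter, Finset.mem_univ, true_and] at hi' ⊢
    exact (hP i i' j c hij hi').resolve_left hic

/-- Stability of the two-variable permanent of a Ferrers board. -/
theorem perm_ferrersMat_ne_zero : ∀ (n : ℕ) (P : Fin n → Fin n → Prop)
    (_ : ∀ i i' j j', P i j → P i' j' → P i j' ∨ P i' j)
    (x y : Fin n → ℂ) (_ : ∀ j, 0 < (x j).im) (_ : ∀ i, 0 < (y i).im),
    perm (ferrersMat P x y) ≠ 0 := by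
  intro n
  induction n with
  | zero => intro P _ x y _ _; simp [perm]
  | succ n ih =>
    intro P hP x y hx hy
    obtain ⟨c, hc⟩ := exists_max_col P hP
    by_cases hr : ∃ r, ¬ P r c
    · obtain ⟨r, hr⟩ := hr
      rw [← perm_submatrix _ (Equiv.swap 0 r) (Equiv.swap 0 c)]
      refine ferrersMat_step (fun i j => P (Equiv.swap 0 r i) (Equiv.swap 0 c j)) ?_ ?_ ?_
        (fun j => x (Equiv.swap 0 c j)) (fun i => y (Equiv.swap 0 r i))
        (fun _ => hx _) (fun _ => hy _)
      · intro j h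
        rw [Equiv.swap_apply_left] at h
        exact hr (hc _ _ h)
      · intro i j h
        rw [Equiv.swap_apply_left]
        exact hc _ _ h
      · exact ih (fun i j => P (Equiv.swap 0 r i.succ) (Equiv.swap 0 c j.succ))
          fun i k j l => hP (Equiv.swap 0 r i.succ) (Equiv.swap 0 r k.succ)
            (Equiv.swap 0 c j.succ) (Equiv.swap 0 c l.succ)
    -- The maximal column `c` is full. Transposing and complementing the board exchanges the roles of
    -- `x` and `y` and turns `c` into an empty row.
    · push Not at hr
      obtain ⟨r, hr'⟩ := exists_max_col (fun j i => ¬ P i j) fun j j' i i' h h' => by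
        by_contra! hh
        rcases hP _ _ _ _ hh.1 hh.2 with h1 | h1
        · exact h' h1
        · exact h h1
      have hperm : perm (ferrersMat P x y) =
          perm (fun j i => ferrersMat P x y (Equiv.swap 0 r i) (Equiv.swap 0 c j)) :=
        (perm_submatrix _ (Equiv.swap 0 r) (Equiv.swap 0 c)).symm.trans (perm_transpose _).symm
      rw [hperm]
      have := ferrersMat_step (fun j i => ¬ P (Equiv.swap 0 r i) (Equiv.swap 0 c j)) ?_ ?_ ?_
        (fun i => y (Equiv.swap 0 r i)) (fun j => x (Equiv.swap 0 c j))
        (fun _ => hy _) (fun _ => hx _)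
      · refine (congrArg perm ?_).trans_ne this
        ext j i
        by_cases h : P (Equiv.swap 0 r i) (Equiv.swap 0 c j) <;> simp [ferrersMat, h]
      · intro i h
        rw [Equiv.swap_apply_left] at h
        exact h (hr _)
      · intro j i h
        rw [Equiv.swap_apply_left]
        exact hr' _ _ h
      · refine ih (fun j i => ¬ P (Equiv.swap 0 r i.succ) (Equiv.swap 0 c j.succ))
          fun j j' i i' h h' => ?_
        by_contra! hh
        rcases hP _ _ _ _ hh.1 hh.2 with h1 | h1
        · exact h' h1
        · exact h h1

/-! ### Stability of the monotone column permanent -/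

theorem perm_col_smul {n : ℕ} {R : Type*} [CommRing R] (M : Matrix (Fin n) (Fin n) R)
    (c : Fin n → R) : perm (fun i j => c j * M i j) = (∏ j, c j) * perm M := by
  unfold perm
  rw [Finset.mul_sum]
  refine Finset.sum_congr rfl fun σ _ => ?_
  rw [Finset.prod_mul_distrib, Equiv.prod_comp σ c]

/-- Stability for matrices whose columns are `z j` plus the indicator of a board column. Rescaling
column `j` by `y / z j` gives the board matrix with `x j = y (1 + 1 / z j)` and all row variables
equal to `y`. -/
theorem perm_step_ne_zero {n : ℕ} (P : Fin n → Fin n → Prop) [∀ i j, Decidable (P i j)]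
    (hP : ∀ i i' j j', P i j → P i' j' → P i j' ∨ P i' j)
    (z : Fin n → ℂ) (hz : ∀ j, 0 < (z j).im) :
    perm (fun i j => z j + if P i j then 1 else 0) ≠ 0 := by
  have hz0 : ∀ j, z j ≠ 0 := fun j h => by have := hz j; simp [h] at this
  have hinv : ∀ j, (z j)⁻¹.im < 0 := fun j => by
    rw [Complex.inv_im]
    exact div_neg_of_neg_of_pos (neg_neg_of_pos (hz j)) (Complex.normSq_pos.2 (hz0 j))
  obtain ⟨ε, hε⟩ : ∃ ε : ℝ, ∀ j, 0 < -(z j)⁻¹.im + ε * (1 + (z j)⁻¹).re ∧ 0 < ε := by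
    have : ∀ᶠ ε : ℝ in nhdsWithin 0 (Set.Ioi 0),
        ∀ j, 0 < -(z j)⁻¹.im + ε * (1 + (z j)⁻¹).re ∧ 0 < ε := by
      rw [Filter.eventually_all]
      intro j
      refine Filter.Eventually.and ?_ self_mem_nhdsWithin
      refine Filter.Eventually.filter_mono nhdsWithin_le_nhds ?_
      have hc : ContinuousAt (fun ε : ℝ => -(z j)⁻¹.im + ε * (1 + (z j)⁻¹).re) 0 := by fun_prop
      refine hc.eventually (lt_mem_nhds ?_)
      have := hinv j
      simp only [zero_mul, add_zero]
      linarith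
    exact this.exists
  -- Each `1 + 1 / z j` lies in the lower half-plane, so multiplying by `y` close to `-1` brings all
  -- of them into the upper half-plane.
  set y : ℂ := ⟨-1, ε⟩ with hy
  have hy0 : y ≠ 0 := fun h => by
    have := congrArg Complex.re h
    simp [hy] at this
  have hmain := perm_ferrersMat_ne_zero n P hP (fun j => y * (1 + (z j)⁻¹)) (fun _ => y)
    (fun j => by
      have := (hε j).1
      simp only [hy, Complex.mul_im, Complex.add_im, Complex.one_im, zero_add]
      linarith)
    (fun j => (hε j).2)
  have heq : perm (fun i j => z j + if P i j then 1 else 0) =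
      (∏ j, z j / y) * perm (ferrersMat P (fun j => y * (1 + (z j)⁻¹)) (fun _ => y)) := by
    rw [← perm_col_smul]
    congr 1
    ext i j
    have := hz0 j
    by_cases h : P i j
    · simp only [ferrersMat, h, if_true]
      field_simp
    · simp only [ferrersMat, h, if_false]
      field_simp
      simp
  rw [heq]
  exact mul_ne_zero (Finset.prod_ne_zero_iff.2 fun j _ => div_ne_zero (hz0 j) hy0) hmain

theorem perm_updateCol_eq {n : ℕ} {R : Type*} [CommRing R] (M : Matrix (Fin n) (Fin n) R)
    (j : Fin n) (v : Fin n → R) :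
    perm (M.updateCol j v) = ∑ σ : Equiv.Perm (Fin n), v (σ.symm j) *
      ∏ i ∈ Finset.univ.erase (σ.symm j), M i (σ i) := by
  unfold perm
  refine Finset.sum_congr rfl fun σ _ => ?_
  rw [← Finset.mul_prod_erase _ _ (Finset.mem_univ (σ.symm j))]
  congr 1
  · simp
  · refine Finset.prod_congr rfl fun i hi => ?_
    have : σ i ≠ j := fun h => Finset.ne_of_mem_erase hi (by simp [← h])
    simp [this]

/-- Linearity of the permanent in column `j`. -/
theorem perm_updateCol_eq_sum {n : ℕ} {R : Type*} [CommRing R] (M : Matrix (Fin n) (Fin n) R)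
    (j : Fin n) (v : Fin n → R) :
    perm (M.updateCol j v) = ∑ i, v i * perm (M.updateCol j (Pi.single i 1)) := by
  simp only [perm_updateCol_eq, Finset.mul_sum]
  rw [Finset.sum_comm]
  refine Finset.sum_congr rfl fun σ _ => ?_
  rw [Finset.sum_eq_single (σ.symm j)]
  · simp
  · intro i _ hi
    simp [hi.symm]
  · simp

/-- Abel summation: an antitone sequence is paired with a sequence of nonnegative partial sums. -/
theorem last_mul_sum_le : ∀ (n : ℕ) (q a : Fin (n + 1) → ℝ) (_ : Antitone a)
    (_ : ∀ k : ℕ, 0 ≤ ∑ i : Fin (n + 1), if (i : ℕ) < k then q i else 0),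
    a (Fin.last n) * ∑ i, q i ≤ ∑ i, q i * a i := by
  intro n
  induction n with
  | zero => intro q a _ _; simp [mul_comm]
  | succ n ih =>
    intro q a ha hq
    have h1 := ih (fun i => q i.castSucc) (fun i => a i.castSucc)
      (fun i j h => ha (Fin.castSucc_le_castSucc_iff.2 h)) (fun k => by
        refine (hq (min k (n + 1))).trans_eq ?_
        rw [Fin.sum_univ_castSucc]
        simp only [Fin.val_castSucc, lt_min_iff, Fin.val_last, lt_irrefl, and_false, if_false,
          add_zero]
        exact Finset.sum_congr rfl fun i _ => if_congr (by omega) rfl rfl)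
    have h2 : 0 ≤ ∑ i : Fin (n + 1), q i.castSucc := by
      refine (hq (n + 1)).trans_eq ?_
      rw [Fin.sum_univ_castSucc]
      simp only [Fin.val_castSucc, Fin.val_last, lt_irrefl, if_false, add_zero]
      exact Finset.sum_congr rfl fun i _ => if_pos i.isLt
    have h3 : a (Fin.last (n + 1)) ≤ a (Fin.last n).castSucc := ha (Fin.le_last _)
    rw [Fin.sum_univ_castSucc, Fin.sum_univ_castSucc (f := fun i => q i * a i)]
    nlinarith

theorem sum_mul_nonneg_of_antitone {n : ℕ} (q a : Fin n → ℝ) (ha : Antitone a)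
    (hq : ∀ k : ℕ, 0 ≤ ∑ i : Fin n, if (i : ℕ) < k then q i else 0) (h0 : ∑ i, q i = 0) :
    0 ≤ ∑ i, q i * a i := by
  cases n with
  | zero => simp
  | succ n => simpa [h0] using last_mul_sum_le n q a ha hq

/-- The complex matrix obtained from the real matrix `A` by adding `z j` throughout column `j`. -/
noncomputable def shiftMat {n : ℕ} (A : Matrix (Fin n) (Fin n) ℝ) (z : Fin n → ℂ) :
    Matrix (Fin n) (Fin n) ℂ :=
  fun i j => z j + (A i j : ℂ)

/-- Stability when the columns outside `U` are step vectors. Columns join `U` one at a time: with the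
other columns fixed, the permanent is a linear functional `L` of column `j`, and stability for a
column `a` says that `L a / L 1` has nonnegative imaginary part. This condition is linear in `a`,
hence passes from the step vectors to every monotone column. -/
theorem perm_shiftMat_ne_zero_aux {n : ℕ} (U : Finset (Fin n)) :
    ∀ A : Matrix (Fin n) (Fin n) ℝ, MonotoneColumn A →
    (∀ j ∉ U, ∃ k : ℕ, ∀ i : Fin n, A i j = if (i : ℕ) < k then 1 else 0) →
    ∀ z : Fin n → ℂ, (∀ j, 0 < (z j).im) → perm (shiftMat A z) ≠ 0 := by
  induction U using Finset.induction with
  | empty =>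
    intro A _ hk z hz
    choose k hk using fun j => hk j (Finset.notMem_empty j)
    have := perm_step_ne_zero (fun i j : Fin n => (i : ℕ) < k j)
      (fun i i' j j' h h' => by omega) z hz
    have heq : shiftMat A z = fun (i : Fin n) j => z j + if (i : ℕ) < k j then 1 else 0 := by
      ext i j
      simp only [shiftMat, hk]
      split_ifs <;> simp
    rwa [heq]
  | insert j U _ ih =>
    intro A hA hk z hz
    set p : Fin n → ℂ := fun i => perm ((shiftMat A z).updateCol j (Pi.single i 1)) with hp
    have hstep : ∀ (k : ℕ) (w : ℂ), 0 < w.im →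
        w * ∑ i, p i + ∑ i : Fin n, (if (i : ℕ) < k then p i else 0) ≠ 0 := by
      intro k w hw
      have := ih (A.updateCol j fun i => if (i : ℕ) < k then 1 else 0) ?_ ?_
        (Function.update z j w) ?_
      · convert this using 1
        have h1 : shiftMat (A.updateCol j fun i => if (i : ℕ) < k then 1 else 0)
            (Function.update z j w) = (shiftMat A z).updateCol j
              fun i => w + if (i : ℕ) < k then 1 else 0 := by
          ext i l
          by_cases hl : l = j
          · subst hl
            simp only [shiftMat, Matrix.updateCol_self, Function.update_self]
            split_ifs <;> simp
          · simp [shiftMat, hl]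
        rw [h1, perm_updateCol_eq_sum, Finset.mul_sum, ← Finset.sum_add_distrib]
        refine Finset.sum_congr rfl fun i _ => ?_
        simp only [hp]
        split_ifs <;> ring
      · intro i i' l h
        by_cases hl : l = j
        · subst hl
          simp only [Matrix.updateCol_self]
          have : (i : ℕ) ≤ i' := h
          split_ifs <;> first | omega | norm_num
        · simpa [hl] using hA i i' l h
      · intro l hl
        by_cases hlj : l = j
        · exact ⟨k, fun i => by simp [hlj]⟩
        · obtain ⟨k', hk'⟩ := hk l (by simp [hlj, hl])
          exact ⟨k', fun i => by simp [hlj, hk']⟩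
      · intro l
        by_cases hlj : l = j
        · subst hlj; simpa using hw
        · simpa [hlj] using hz l
    have hL : ∑ i, p i ≠ 0 := by
      have := hstep 0 Complex.I (by simp)
      simpa using this
    have hpart : ∀ k : ℕ, 0 ≤ ∑ i : Fin n, if (i : ℕ) < k then (p i / ∑ i, p i).im else 0 := by
      intro k
      by_contra! h
      refine hstep k (-(∑ i : Fin n, if (i : ℕ) < k then p i else 0) / ∑ i, p i) ?_ ?_
      · rw [neg_div, Finset.sum_div, Complex.neg_im, Complex.im_sum]
        refine neg_pos.2 (lt_of_eq_of_lt ?_ h)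
        refine Finset.sum_congr rfl fun i _ => ?_
        split_ifs <;> simp
      · field_simp
        ring
    have hsum := sum_mul_nonneg_of_antitone (fun i => (p i / ∑ i, p i).im) (fun i => A i j)
      (fun i i' h => hA i i' j h) hpart (by
        rw [← Complex.im_sum, ← Finset.sum_div, div_self hL, Complex.one_im])
    intro h0
    have h1 : shiftMat A z = (shiftMat A z).updateCol j fun i => z j + (A i j : ℂ) := by
      ext i l
      by_cases hl : l = j
      · subst hl; simp [shiftMat]
      · simp [hl]
    rw [h1, perm_updateCol_eq_sum] at h0
    have h2 : z j = -∑ i, (A i j : ℂ) * (p i / ∑ i, p i) := by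
      have : z j * ∑ i, p i + ∑ i, (A i j : ℂ) * p i = 0 := by
        rw [← h0, Finset.mul_sum, ← Finset.sum_add_distrib]
        exact Finset.sum_congr rfl fun i _ => by ring
      simp only [← mul_div_assoc]
      rw [← Finset.sum_div]
      field_simp
      linear_combination this
    have h3 := hz j
    rw [h2, Complex.neg_im, Complex.im_sum] at h3
    simp only [Complex.im_ofReal_mul] at h3
    have h4 : ∑ i, A i j * (p i / ∑ i, p i).im = ∑ i, (p i / ∑ i, p i).im * A i j :=
      Finset.sum_congr rfl fun i _ => mul_comm _ _
    rw [h4] at h3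
    linarith

/-- Stability of the monotone column permanent. -/
theorem perm_shiftMat_ne_zero {n : ℕ} (A : Matrix (Fin n) (Fin n) ℝ) (hA : MonotoneColumn A)
    (z : Fin n → ℂ) (hz : ∀ j, 0 < (z j).im) : perm (shiftMat A z) ≠ 0 :=
  perm_shiftMat_ne_zero_aux Finset.univ A hA (fun j hj => absurd (Finset.mem_univ j) hj) z hz

theorem MonotoneColumn.colOnes {n : ℕ} {A : Matrix (Fin n) (Fin n) ℝ} (hA : MonotoneColumn A)
    (S : Finset (Fin n)) : MonotoneColumn (colOnes A S) := by
  intro i i' j h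
  unfold _root_.colOnes
  split_ifs
  · exact le_rfl
  · exact hA i i' j h

theorem colOnes_colOnes {n : ℕ} (A : Matrix (Fin n) (Fin n) ℝ) (S T : Finset (Fin n)) :
    colOnes (colOnes A S) T = colOnes A (T ∪ S) := by
  ext i j
  by_cases h : j ∈ T <;> simp [colOnes, h]

theorem perm_shiftMat_split {n : ℕ} (A : Matrix (Fin n) (Fin n) ℝ) (z : Fin n → ℂ) (j : Fin n) :
    perm (shiftMat A z) = z j * perm (shiftMat (colOnes A {j}) (Function.update z j 0)) +
      perm (shiftMat A (Function.update z j 0)) := by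
  have h1 : shiftMat A z = (shiftMat A z).updateCol j fun i => z j + (A i j : ℂ) := by
    ext i l
    by_cases hl : l = j
    · subst hl; simp [shiftMat]
    · simp [hl]
  have h2 : shiftMat (colOnes A {j}) (Function.update z j 0) =
      (shiftMat A z).updateCol j fun i => 1 := by
    ext i l
    by_cases hl : l = j
    · subst hl; simp [shiftMat, colOnes]
    · simp [shiftMat, colOnes, hl]
  have h3 : shiftMat A (Function.update z j 0) =
      (shiftMat A z).updateCol j fun i => (A i j : ℂ) := by
    ext i l
    by_cases hl : l = j
    · subst hl; simp [shiftMat]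
    · simp [shiftMat, hl]
  rw [h2, h3, h1]
  simp only [Matrix.updateCol_idem]
  simp only [perm_updateCol_eq]
  rw [Finset.mul_sum, ← Finset.sum_add_distrib]
  exact Finset.sum_congr rfl fun σ _ => by ring

/-- As a function of `z j` the permanent is `z j * p + s`, so its having no zero in the upper
half-plane bounds the imaginary part of `s / p` below by `0`. -/
theorem im_mul_conj_nonneg {n : ℕ} (A : Matrix (Fin n) (Fin n) ℝ) (hA : MonotoneColumn A)
    (j : Fin n) (z : Fin n → ℂ) (hz : ∀ k, k ≠ j → 0 < (z k).im) :
    0 ≤ (perm (shiftMat A (Function.update z j 0)) *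
      (starRingEnd ℂ) (perm (shiftMat (colOnes A {j}) (Function.update z j 0)))).im := by
  set s := perm (shiftMat A (Function.update z j 0)) with hs
  set p := perm (shiftMat (colOnes A {j}) (Function.update z j 0)) with hp
  by_contra! h
  have hp0 : p ≠ 0 := fun h0 => by simp [h0] at h
  have hsp : (s / p).im < 0 := by
    rw [div_eq_mul_inv, Complex.inv_def, ← mul_assoc, Complex.im_mul_ofReal]
    exact mul_neg_of_neg_of_pos h (inv_pos.2 (Complex.normSq_pos.2 hp0))
  refine perm_shiftMat_ne_zero A hA (Function.update z j (-(s / p))) (fun k => ?_) ?_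
  · by_cases hk : k = j
    · subst hk; simpa using hsp
    · simpa [hk] using hz k hk
  · rw [perm_shiftMat_split A _ j]
    simp only [Function.update_self, Function.update_idem]
    rw [← hs, ← hp]
    field_simp
    ring

/-- Unlike nonvanishing, the inequality of `im_mul_conj_nonneg` is a closed condition, so it extends
to real `z k`. -/
theorem im_mul_conj_nonneg_closed {n : ℕ} (A : Matrix (Fin n) (Fin n) ℝ) (hA : MonotoneColumn A)
    (j : Fin n) (z : Fin n → ℂ) (hz : ∀ k, 0 ≤ (z k).im) :
    0 ≤ (perm (shiftMat A (Function.update z j 0)) *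
      (starRingEnd ℂ) (perm (shiftMat (colOnes A {j}) (Function.update z j 0)))).im := by
  let f : ℝ → ℝ := fun ε =>
    (perm (shiftMat A (Function.update (fun k => z k + ε * Complex.I) j 0)) *
      (starRingEnd ℂ) (perm (shiftMat (colOnes A {j})
        (Function.update (fun k => z k + ε * Complex.I) j 0)))).im
  have hcont : ∀ B : Matrix (Fin n) (Fin n) ℝ, Continuous fun ε : ℝ =>
      perm (shiftMat B (Function.update (fun k => z k + ε * Complex.I) j 0)) := by
    intro B
    unfold perm shiftMat
    refine continuous_finsetSum _ fun σ _ => continuous_finsetProd _ fun i _ => ?_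
    refine Continuous.add ?_ continuous_const
    by_cases h : σ i = j
    · simp only [h, Function.update_self]
      exact continuous_const
    · simp only [Function.update_of_ne h]
      fun_prop
  have hf : Continuous f :=
    Complex.continuous_im.comp ((hcont A).mul (Complex.continuous_conj.comp (hcont _)))
  have hlim : Filter.Tendsto f (nhdsWithin 0 (Set.Ioi 0)) (nhds (f 0)) :=
    hf.continuousAt.mono_left nhdsWithin_le_nhds
  have hpos : 0 ≤ f 0 := by
    refine ge_of_tendsto hlim ?_
    filter_upwards [self_mem_nhdsWithin] with ε hε
    refine im_mul_conj_nonneg A hA j _ fun k _ => ?_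
    have h1 := hz k
    have h2 : (0 : ℝ) < ε := hε
    simp
    linarith
  simpa [f] using hpos

theorem perm_shiftMat_zero {n : ℕ} (A : Matrix (Fin n) (Fin n) ℝ) :
    perm (shiftMat A 0) = ((perm A : ℝ) : ℂ) := by
  simp [perm, shiftMat]

/-- The Rayleigh inequality: `im_mul_conj_nonneg_closed` at `z i = I` and all other `z k = 0`, where
the imaginary part is exactly the difference of the two sides. -/
theorem perm_rayleigh {n : ℕ} (A : Matrix (Fin n) (Fin n) ℝ) (hA : MonotoneColumn A)
    (i j : Fin n) (hij : i ≠ j) :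
    perm (colOnes A {i, j}) * perm A ≤ perm (colOnes A {i}) * perm (colOnes A {j}) := by
  have h := im_mul_conj_nonneg_closed A hA j (Pi.single i Complex.I) (fun k => by
    by_cases hk : k = i
    · subst hk; simp
    · simp [hk])
  have hupd : Function.update (Pi.single i Complex.I : Fin n → ℂ) j 0 = Pi.single i Complex.I := by
    rw [Function.update_eq_self_iff]
    simp [hij.symm]
  have hupd' : Function.update (Pi.single i Complex.I : Fin n → ℂ) i 0 = 0 := by
    ext k
    by_cases hk : k = i
    · subst hk; simp
    · simp [hk]
  rw [hupd, perm_shiftMat_split A _ i, perm_shiftMat_split (colOnes A {j}) _ i, hupd',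
    colOnes_colOnes] at h
  simp only [perm_shiftMat_zero, Pi.single_eq_same] at h
  rw [show ({i} ∪ {j} : Finset (Fin n)) = {i, j} from rfl] at h
  simp at h
  linarith

/-! ### The lattice inequality and the bound on the permanent -/

/-- From exchanging two elements to exchanging an element `i` and a set `U`. -/
theorem neg_assoc_insert {α : Type*} [DecidableEq α] (g : Finset α → ℝ) (hpos : ∀ S, 0 < g S)
    (hloc : ∀ S i j, i ∉ S → j ∉ S → i ≠ j →
      g (insert i (insert j S)) * g S ≤ g (insert i S) * g (insert j S))
    (S : Finset α) (i : α) (U : Finset α) :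
    Disjoint U S → i ∉ U → i ∉ S → g (insert i (U ∪ S)) * g S ≤ g (insert i S) * g (U ∪ S) := by
  induction U using Finset.induction with
  | empty => intro _ _ _; simp
  | insert j U hj ih =>
    intro hd hi hS
    rw [Finset.disjoint_insert_left] at hd
    rw [Finset.mem_insert, not_or] at hi
    have h1 := ih hd.2 hi.2 hS
    have h2 := hloc (U ∪ S) i j (by simp [hi.2, hS]) (by simp [hj, hd.1]) hi.1
    rw [Finset.insert_union]
    refine le_of_mul_le_mul_right ?_ (hpos (U ∪ S))
    calc g (insert i (insert j (U ∪ S))) * g S * g (U ∪ S)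
        = (g (insert i (insert j (U ∪ S))) * g (U ∪ S)) * g S := by ring
      _ ≤ (g (insert i (U ∪ S)) * g (insert j (U ∪ S))) * g S :=
          mul_le_mul_of_nonneg_right h2 (hpos _).le
      _ = (g (insert i (U ∪ S)) * g S) * g (insert j (U ∪ S)) := by ring
      _ ≤ (g (insert i S) * g (U ∪ S)) * g (insert j (U ∪ S)) :=
          mul_le_mul_of_nonneg_right h1 (hpos _).le
      _ = _ := by ring

/-- From exchanging an element and a set to exchanging two sets `V` and `W`. -/
theorem neg_assoc_union {α : Type*} [DecidableEq α] (g : Finset α → ℝ) (hpos : ∀ S, 0 < g S)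
    (hloc : ∀ S i j, i ∉ S → j ∉ S → i ≠ j →
      g (insert i (insert j S)) * g S ≤ g (insert i S) * g (insert j S))
    (S W V : Finset α) :
    Disjoint V (W ∪ S) → Disjoint W S →
      g (V ∪ (W ∪ S)) * g S ≤ g (W ∪ S) * g (V ∪ S) := by
  induction V using Finset.induction with
  | empty => intro _ _; simp
  | insert i V hi ih =>
    intro hd hW
    rw [Finset.disjoint_insert_left] at hd
    have h1 := ih hd.2 hW
    have hd1 := hd.1
    have hd2 := hd.2
    rw [Finset.mem_union, not_or] at hd1
    rw [Finset.disjoint_union_right] at hd2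
    have h2 := neg_assoc_insert g hpos hloc (V ∪ S) i W
      (Finset.disjoint_union_right.2 ⟨hd2.1.symm, hW⟩) hd1.1 (by simp [hi, hd1.2])
    rw [Finset.insert_union, Finset.insert_union]
    rw [Finset.union_left_comm] at h2
    refine le_of_mul_le_mul_right ?_ (hpos (V ∪ S))
    calc g (insert i (V ∪ (W ∪ S))) * g S * g (V ∪ S)
        = (g (insert i (V ∪ (W ∪ S))) * g (V ∪ S)) * g S := by ring
      _ ≤ (g (insert i (V ∪ S)) * g (V ∪ (W ∪ S))) * g S :=
          mul_le_mul_of_nonneg_right h2 (hpos _).le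
      _ = (g (V ∪ (W ∪ S)) * g S) * g (insert i (V ∪ S)) := by ring
      _ ≤ (g (W ∪ S) * g (V ∪ S)) * g (insert i (V ∪ S)) :=
          mul_le_mul_of_nonneg_right h1 (hpos _).le
      _ = _ := by ring

/-- A positive set function satisfying the log-submodular inequality locally, for sets `S ∪ {i}` and
`S ∪ {j}`, satisfies it globally. -/
theorem lattice_of_local {α : Type*} [DecidableEq α] (g : Finset α → ℝ) (hpos : ∀ S, 0 < g S)
    (hloc : ∀ S i j, i ∉ S → j ∉ S → i ≠ j →
      g (insert i (insert j S)) * g S ≤ g (insert i S) * g (insert j S))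
    (S T : Finset α) : g (S ∪ T) * g (S ∩ T) ≤ g S * g T := by
  have h := neg_assoc_union g hpos hloc (S ∩ T) (S \ T) (T \ S)
    (by
      rw [Finset.disjoint_left]
      intro a
      simp only [Finset.mem_sdiff, Finset.mem_union, Finset.mem_inter]
      tauto)
    (by
      rw [Finset.disjoint_left]
      intro a
      simp only [Finset.mem_sdiff, Finset.mem_inter]
      tauto)
  have e1 : S \ T ∪ S ∩ T = S := by ext a; simp; tauto
  have e2 : T \ S ∪ S ∩ T = T := by ext a; simp; tauto
  have e3 : T \ S ∪ S = S ∪ T := by ext a; simp; tauto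
  rwa [e1, e2, e3] at h

theorem perm_colOnes_lattice_of_pos {n : ℕ} (A : Matrix (Fin n) (Fin n) ℝ)
    (hA : MonotoneColumn A) (hpos : ∀ i j, 0 < A i j) (S T : Finset (Fin n)) :
    perm (colOnes A (S ∪ T)) * perm (colOnes A (S ∩ T)) ≤
      perm (colOnes A S) * perm (colOnes A T) := by
  refine lattice_of_local (fun S => perm (colOnes A S)) (fun S => ?_) (fun S i j _ _ hij => ?_) S T
  · refine Finset.sum_pos (fun σ _ => Finset.prod_pos fun i _ => ?_) Finset.univ_nonempty
    unfold colOnes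
    split_ifs
    · exact one_pos
    · exact hpos _ _
  · have := perm_rayleigh (colOnes A S) (hA.colOnes S) i j hij
    simpa only [colOnes_colOnes, Finset.insert_union, Finset.singleton_union] using this

theorem perm_colOnes_lattice {n : ℕ} (A : Matrix (Fin n) (Fin n) ℝ)
    (hA : MonotoneColumn A) (hnonneg : ∀ i j, 0 ≤ A i j) (S T : Finset (Fin n)) :
    perm (colOnes A (S ∪ T)) * perm (colOnes A (S ∩ T)) ≤
      perm (colOnes A S) * perm (colOnes A T) := by
  -- Adding `ε > 0` to all entries makes every permanent positive; then `ε → 0`.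
  let F : Finset (Fin n) → ℝ → ℝ := fun S ε => perm (colOnes (fun i j => A i j + ε) S)
  have hF : ∀ S, Continuous (F S) := by
    intro S
    simp only [F, perm, colOnes]
    refine continuous_finsetSum _ fun σ _ => continuous_finsetProd _ fun i _ => ?_
    split_ifs <;> fun_prop
  have hF0 : ∀ S, F S 0 = perm (colOnes A S) := by
    intro S
    simp [F]
  have hlim : ∀ S T, Filter.Tendsto (fun ε => F S ε * F T ε) (nhdsWithin 0 (Set.Ioi 0))
      (nhds (perm (colOnes A S) * perm (colOnes A T))) := by
    intro S T
    rw [← hF0, ← hF0]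
    exact ((hF S).mul (hF T)).continuousAt.mono_left nhdsWithin_le_nhds
  refine le_of_tendsto_of_tendsto (hlim _ _) (hlim _ _) ?_
  filter_upwards [self_mem_nhdsWithin] with ε hε
  have hε' : (0 : ℝ) < ε := hε
  exact perm_colOnes_lattice_of_pos _ (fun i i' j h => add_le_add_left (hA i i' j h) ε)
    (fun i j => add_pos_of_nonneg_of_pos (hnonneg i j) hε') S T

/-- This is `per = (n - 1)! · s_j` for the matrix keeping only column `j`, multiplied by `n`. -/
theorem card_mul_perm_colOnes_compl {n : ℕ} (A : Matrix (Fin n) (Fin n) ℝ) (j : Fin n) :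
    n * perm (colOnes A {j}ᶜ) = n.factorial * ∑ i, A i j := by
  have h1 : ∀ l : Fin n, ∑ σ : Equiv.Perm (Fin n), A (σ l) j = perm (colOnes A {j}ᶜ) := by
    intro l
    have hc : colOnes A {j}ᶜ = (Matrix.of fun _ _ => (1 : ℝ)).updateCol j fun i => A i j := by
      ext i k
      by_cases hk : k = j
      · subst hk; simp [colOnes]
      · simp [colOnes, hk]
    rw [hc, perm_updateCol_eq]
    simp only [Matrix.of_apply, Finset.prod_const_one, mul_one]
    refine Fintype.sum_equiv ((Equiv.mulRight (Equiv.swap l j)).trans (Equiv.inv _)) _ _ fun σ => ?_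
    change A (σ l) j = A (σ (Equiv.swap l j j)) j
    rw [Equiv.swap_apply_right]
  calc (n : ℝ) * perm (colOnes A {j}ᶜ)
      = ∑ l : Fin n, ∑ σ : Equiv.Perm (Fin n), A (σ l) j := by simp [h1]
    _ = ∑ σ : Equiv.Perm (Fin n), ∑ i, A i j := by
        rw [Finset.sum_comm]
        exact Finset.sum_congr rfl fun σ _ => Equiv.sum_comp σ fun i => A i j
    _ = n.factorial * ∑ i, A i j := by simp [Fintype.card_perm]

theorem perm_colOnes_univ {n : ℕ} (A : Matrix (Fin n) (Fin n) ℝ) :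
    perm (colOnes A Finset.univ) = n.factorial := by
  simp [perm, colOnes, Fintype.card_perm]

/-- Adding `j` to `U` uses the lattice inequality for the sets `Uᶜ` and `{j}ᶜ`, whose union is
everything and whose intersection is `(insert j U)ᶜ`. -/
theorem pow_mul_perm_colOnes_compl_le {n : ℕ} (A : Matrix (Fin n) (Fin n) ℝ)
    (hA : MonotoneColumn A) (hnonneg : ∀ i j, 0 ≤ A i j) (U : Finset (Fin n)) :
    (n : ℝ) ^ U.card * perm (colOnes A Uᶜ) ≤ n.factorial * ∏ j ∈ U, ∑ i, A i j := by
  induction U using Finset.induction with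
  | empty => simp [perm_colOnes_univ]
  | insert j U hj ih =>
    have h := perm_colOnes_lattice A hA hnonneg Uᶜ {j}ᶜ
    have e1 : Uᶜ ∪ {j}ᶜ = Finset.univ := by
      ext a
      by_cases ha : a = j
      · subst ha; simp [hj]
      · simp [ha]
    have e2 : Uᶜ ∩ {j}ᶜ = (insert j U)ᶜ := by
      ext a
      simp [and_comm]
    rw [e1, e2, perm_colOnes_univ] at h
    have hf : (0 : ℝ) < n.factorial := Nat.cast_pos.2 n.factorial_pos
    have hs : 0 ≤ ∑ i, A i j := Finset.sum_nonneg fun i _ => hnonneg i j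
    have h1 : (n : ℝ) * perm (colOnes A (insert j U)ᶜ) ≤ perm (colOnes A Uᶜ) * ∑ i, A i j := by
      refine le_of_mul_le_mul_left ?_ hf
      calc (n.factorial : ℝ) * (n * perm (colOnes A (insert j U)ᶜ))
          = n * (n.factorial * perm (colOnes A (insert j U)ᶜ)) := by ring
        _ ≤ n * (perm (colOnes A Uᶜ) * perm (colOnes A {j}ᶜ)) :=
            mul_le_mul_of_nonneg_left h (Nat.cast_nonneg n)
        _ = perm (colOnes A Uᶜ) * (n * perm (colOnes A {j}ᶜ)) := by ring
        _ = _ := by rw [card_mul_perm_colOnes_compl]; ring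
    rw [Finset.card_insert_of_notMem hj, Finset.prod_insert hj, pow_succ]
    calc (n : ℝ) ^ U.card * n * perm (colOnes A (insert j U)ᶜ)
        = (n : ℝ) ^ U.card * (n * perm (colOnes A (insert j U)ᶜ)) := by ring
      _ ≤ (n : ℝ) ^ U.card * (perm (colOnes A Uᶜ) * ∑ i, A i j) :=
          mul_le_mul_of_nonneg_left h1 (by positivity)
      _ = ((n : ℝ) ^ U.card * perm (colOnes A Uᶜ)) * ∑ i, A i j := by ring
      _ ≤ (n.factorial * ∏ j ∈ U, ∑ i, A i j) * ∑ i, A i j := mul_le_mul_of_nonneg_right ih hs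
      _ = _ := by ring

/-- For an `n × n` monotone column matrix `A` with nonnegative entries:
`per(A_S) per(A_T) ≥ per(A_{S∪T}) per(A_{S∩T})` for all `S, T ⊆ [n]`, and
`per(A) ≤ s_1 ⋯ s_n · n!/nⁿ` where `s_j` is the sum of the entries in
column `j`. -/
theorem per_log_submodular_and_AM (n : ℕ) (A : Matrix (Fin n) (Fin n) ℝ)
    (hA : MonotoneColumn A) (hnonneg : ∀ i j, 0 ≤ A i j) :
    (∀ S T : Finset (Fin n),
      perm (colOnes A (S ∪ T)) * perm (colOnes A (S ∩ T)) ≤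
        perm (colOnes A S) * perm (colOnes A T)) ∧
    perm A ≤ (∏ j : Fin n, ∑ i : Fin n, A i j) * (n.factorial : ℝ) / (n : ℝ) ^ n := by
  refine ⟨perm_colOnes_lattice A hA hnonneg, ?_⟩
  have h := pow_mul_perm_colOnes_compl_le A hA hnonneg Finset.univ
  have e : colOnes A (Finset.univ : Finset (Fin n))ᶜ = A := by
    ext i j
    simp [colOnes]
  rw [e, Finset.card_univ, Fintype.card_fin] at h
  have hn : (0 : ℝ) < (n : ℝ) ^ n := by
    rcases Nat.eq_zero_or_pos n with rfl | hn
    · simp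
    · positivity
  rw [le_div_iff₀ hn]
  linarith
end
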